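/- arXiv:2206.10409 — 2 statements merged into one kernel-verified Lean document; each statement's English description precedes it below -/
import Mathlib

section
/- For every F ∈ 𝔉, write F = (4 n_ij) with nonnegative integers n_ij (possible by Proposition 3.3, and the n_ij are uniquely determined by F), and set N_i = n_i1 + n_i2 + n_i3 for i = 1, 2, 3. Then ((N_1 − N_3) mod 4, (N_2 − N_3) mod 4) ∈ 𝒯; this pair is called the type of F. Moreover, every one of the eight pairs in 𝒯 occurs as the type of some F ∈ 𝔉. -/
/-- The (normalized) Cartan matrix of the affine Lie algebra `B₂⁽¹⁾`. -/
noncomputable def cartanB2 : Matrix (Fin 3) (Fin 3) ℝ :=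
  !![1, 0, -1; 0, 1, -1; -1/2, -1/2, 1]

/-- The lift of the generator `R_i` to 3×3 real matrices: the `i`-th row `F_i` is
replaced by `F_i + 4 e_i - 2 ∑_j a_{ij} F_j` and the other rows are unchanged. -/
noncomputable def RM (i : Fin 3) (F : Matrix (Fin 3) (Fin 3) ℝ) : Matrix (Fin 3) (Fin 3) ℝ :=
  Matrix.updateRow F i
    (fun k => F i k + 4 * (if k = i then 1 else 0) - 2 * ∑ j, cartanB2 i j * F j k)

/-- Membership in `𝔉`, the smallest set of 3×3 real matrices containing the zero
matrix and closed under the lifted generators `R₁, R₂, R₃`. -/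
inductive FMem : Matrix (Fin 3) (Fin 3) ℝ → Prop
  | zero : FMem 0
  | step (i : Fin 3) {F : Matrix (Fin 3) (Fin 3) ℝ} : FMem F → FMem (RM i F)

/-- The set `𝒯` of the eight admissible types in `(ℤ/4ℤ)²`. -/
def Ttypes : Set (ZMod 4 × ZMod 4) :=
  {(0, 0), (0, 1), (1, 0), (1, 1), (2, 2), (2, 3), (3, 2), (3, 3)}

/-- The integral form of `RM` after dividing by `4`, acting on a vector `v = n μ`. -/
def reflInt (i : Fin 3) (μ v : Fin 3 → ℤ) : Fin 3 → ℤ :=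
  Function.update v i
    (![-v 0 + μ 0 + 2 * v 2, -v 1 + μ 1 + 2 * v 2, -v 2 + μ 2 + v 0 + v 1] i)

/-- The Pohozaev identity for `4 v` and `μ`, divided by `16`. -/
def PohozaevInt (μ v : Fin 3 → ℤ) : Prop :=
  (v 0 - v 2) ^ 2 + (v 1 - v 2) ^ 2 = μ 0 * v 0 + μ 1 * v 1 + 2 * (μ 2 * v 2)

theorem PohozaevInt.reflInt {μ v : Fin 3 → ℤ} (h : PohozaevInt μ v) (i : Fin 3) :
    PohozaevInt μ (reflInt i μ v) := by
  unfold PohozaevInt at *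
  fin_cases i <;> simp [_root_.reflInt, Function.update] <;> linarith

/-- A Pohozaev vector for a standard basis vector is nonnegative. -/
theorem PohozaevInt.nonneg_of_single {k : Fin 3} {v : Fin 3 → ℤ}
    (h : PohozaevInt (Pi.single k 1) v) (i : Fin 3) : 0 ≤ v i := by
  have neg_le_sq (a : ℤ) : -a ≤ a ^ 2 := by simpa using Int.le_self_sq (-a)
  unfold PohozaevInt at h
  have h₀ := Int.le_self_sq (v 0 - v 2)
  have h₁ := Int.le_self_sq (v 1 - v 2)
  have h₀' := neg_le_sq (v 0 - v 2)
  have h₁' := neg_le_sq (v 1 - v 2)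
  have s₀ := sq_nonneg (v 0 - v 2)
  have s₁ := sq_nonneg (v 1 - v 2)
  have t₀ := sq_nonneg (v 0 - v 2 + 1)
  have t₁ := sq_nonneg (v 1 - v 2 + 1)
  rw [add_sq] at t₀ t₁
  fin_cases k <;> fin_cases i <;> simp at h ⊢ <;> omega

/-- `RM i` acts on the columns of `F = 4 m` through `reflInt`. -/
theorem RM_apply_eq_reflInt {F : Matrix (Fin 3) (Fin 3) ℝ} {m : Fin 3 → Fin 3 → ℤ}
    (hm : ∀ i j, F i j = 4 * (m i j : ℝ)) (i a k : Fin 3) :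
    RM i F a k = 4 * (reflInt i (Pi.single k 1) (fun b => m b k) a : ℝ) := by
  fin_cases i <;> fin_cases a <;>
    simp [RM, reflInt, cartanB2, Fin.sum_univ_three, hm, Matrix.updateRow_apply,
      Pi.single_apply, eq_comm] <;> split_ifs <;> ring

/-- Every `F ∈ 𝔉` is `4` times an integer matrix satisfying the Pohozaev identity. -/
theorem FMem.exists_int {F : Matrix (Fin 3) (Fin 3) ℝ} (hF : FMem F) :
    ∃ m : Matrix (Fin 3) (Fin 3) ℤ, (∀ i j, F i j = 4 * (m i j : ℝ)) ∧
      ∀ μ, PohozaevInt μ (m.mulVec μ) := by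
  induction hF with
  | zero => exact ⟨0, by simp, by simp [PohozaevInt]⟩
  | @step i F _ ih =>
    obtain ⟨m, hm, hP⟩ := ih
    refine ⟨Matrix.of fun a k => reflInt i (Pi.single k 1) (fun b => m b k) a,
      RM_apply_eq_reflInt hm i, fun μ => ?_⟩
    convert (hP μ).reflInt i using 1
    ext a
    fin_cases i <;> fin_cases a <;>
      simp [reflInt, Matrix.mulVec, dotProduct, Fin.sum_univ_three, Pi.single_apply] <;> ring

theorem FMem.exists_nat {F : Matrix (Fin 3) (Fin 3) ℝ} (hF : FMem F) :
    ∃ n : Fin 3 → Fin 3 → ℕ, ∀ i j, F i j = 4 * (n i j : ℝ) := by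
  obtain ⟨m, hm, hP⟩ := hF.exists_int
  refine ⟨fun i j => (m i j).toNat, fun i j => ?_⟩
  have h : 0 ≤ m i j := by simpa using (hP (Pi.single j 1)).nonneg_of_single i
  rw [hm, ← Int.cast_natCast, Int.toNat_of_nonneg h]

/-- The type in `(ℤ/4ℤ)²` of the matrix `4 n`. -/
def natType (n : Fin 3 → Fin 3 → ℕ) : ZMod 4 × ZMod 4 :=
  (((∑ j, n 0 j : ℕ) : ZMod 4) - ((∑ j, n 2 j : ℕ) : ZMod 4),
    ((∑ j, n 1 j : ℕ) : ZMod 4) - ((∑ j, n 2 j : ℕ) : ZMod 4))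

theorem mem_Ttypes_of_sq_add_sq :
    ∀ x y z : ZMod 4, (x - z) ^ 2 + (y - z) ^ 2 = x + y + 2 * z → (x - z, y - z) ∈ Ttypes := by
  simp only [Ttypes, Set.mem_insert_iff, Set.mem_singleton_iff]
  decide

theorem FMem.natType_mem {F : Matrix (Fin 3) (Fin 3) ℝ} (hF : FMem F)
    {n : Fin 3 → Fin 3 → ℕ} (hn : ∀ i j, F i j = 4 * (n i j : ℝ)) : natType n ∈ Ttypes := by
  obtain ⟨m, hm, hP⟩ := hF.exists_int
  have hmn (i j) : m i j = n i j := by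
    have := hm i j
    rw [hn i j] at this
    exact_mod_cast (mul_left_cancel₀ four_ne_zero this).symm
  have h := hP 1
  simp only [PohozaevInt, Matrix.mulVec, dotProduct, hmn, Pi.one_apply, mul_one, one_mul] at h
  apply mem_Ttypes_of_sq_add_sq
  exact_mod_cast congrArg (Int.cast : ℤ → ZMod 4) h

/-- `t` is the type of some element of `𝔉`. -/
def OccursType (t : ZMod 4 × ZMod 4) : Prop :=
  ∃ F : Matrix (Fin 3) (Fin 3) ℝ, FMem F ∧
    ∃ n : Fin 3 → Fin 3 → ℕ, (∀ i j, F i j = 4 * (n i j : ℝ)) ∧ natType n = t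

theorem OccursType.zero : OccursType (0, 0) :=
  ⟨0, .zero, 0, by simp, by simp [natType]⟩

/-- The action of the generators on types. -/
theorem OccursType.step {a b : ZMod 4} (h : OccursType (a, b)) (i : Fin 3) :
    OccursType (![(1 - a, b), (a, 1 - b), (-b - 1, -a - 1)] i) := by
  obtain ⟨F, hF, n, hn, ht⟩ := h
  obtain ⟨n', hn'⟩ := (hF.step i).exists_nat
  refine ⟨_, hF.step i, n', hn', ?_⟩
  obtain ⟨rfl, rfl⟩ := Prod.mk.inj ht
  have key (c k) : (n' c k : ℤ) = reflInt i (Pi.single k 1) (fun b => (n b k : ℤ)) c := by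
    have h := (hn' c k).symm.trans
      (RM_apply_eq_reflInt (m := fun i j => (n i j : ℤ)) (by simpa using hn) i c k)
    exact_mod_cast mul_left_cancel₀ four_ne_zero h
  have key' (c k) : (n' c k : ZMod 4) =
      (reflInt i (Pi.single k 1) (fun b => (n b k : ℤ)) c : ℤ) := by
    rw [← key, Int.cast_natCast]
  fin_cases i <;>
    simp [natType, Fin.sum_univ_three, key', reflInt] <;> grind

theorem occursType_of_mem {t : ZMod 4 × ZMod 4} (ht : t ∈ Ttypes) : OccursType t := by
  have h00 := OccursType.zero
  have h33 := h00.step 2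
  rcases ht with rfl | rfl | rfl | rfl | rfl | rfl | rfl | rfl
  exacts [h00, h00.step 1, h00.step 0, (h00.step 0).step 1, (h33.step 0).step 1, h33.step 0,
    h33.step 1, h33]

/-- Each `F ∈ 𝔉` can be written as `F = (4 n_{ij})` with `n_{ij} ∈ ℕ`; its type
`((N₁ - N₃) mod 4, (N₂ - N₃) mod 4)`, where `N_i = n_{i1} + n_{i2} + n_{i3}`, lies in `𝒯`;
and every pair in `𝒯` occurs as the type of some `F ∈ 𝔉`. -/
theorem fmat_types :
    (∀ F : Matrix (Fin 3) (Fin 3) ℝ, FMem F →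
      (∃ n : Fin 3 → Fin 3 → ℕ, ∀ i j, F i j = 4 * (n i j : ℝ)) ∧
      (∀ n : Fin 3 → Fin 3 → ℕ, (∀ i j, F i j = 4 * (n i j : ℝ)) →
        (((∑ j, n 0 j : ℕ) : ZMod 4) - ((∑ j, n 2 j : ℕ) : ZMod 4),
          ((∑ j, n 1 j : ℕ) : ZMod 4) - ((∑ j, n 2 j : ℕ) : ZMod 4)) ∈ Ttypes)) ∧
    (∀ t ∈ Ttypes, ∃ F : Matrix (Fin 3) (Fin 3) ℝ, FMem F ∧
      ∃ n : Fin 3 → Fin 3 → ℕ, (∀ i j, F i j = 4 * (n i j : ℝ)) ∧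
        (((∑ j, n 0 j : ℕ) : ZMod 4) - ((∑ j, n 2 j : ℕ) : ZMod 4),
          ((∑ j, n 1 j : ℕ) : ZMod 4) - ((∑ j, n 2 j : ℕ) : ZMod 4)) = t) := by
  exact ⟨fun _ hF => ⟨hF.exists_nat, fun _ hn => hF.natType_mem hn⟩,
    fun _ ht => occursType_of_mem ht⟩
end

section
/- For all real m1, m2 and each ℓ ∈ {1,…,8}, the following matrix identities hold: R_1 F^(ℓ)(m1, m2) = F^(ℓ1)(1 − m1, m2), R_2 F^(ℓ)(m1, m2) = F^(ℓ2)(m1, 1 − m2), and R_3 F^(ℓ)(m1, m2) = F^(ℓ3)(−m2 − 1, −m1 − 1), where the triple (ℓ1, ℓ2, ℓ3) equals (3,2,8), (4,1,6), (1,4,7), (2,3,5), (7,6,4), (8,5,2), (5,8,3), (6,7,1) for ℓ = 1, 2, 3, 4, 5, 6, 7, 8, respectively. Equivalently, for every μ ∈ ℝ³, R_i applied to the vector F^(ℓ)(m1, m2) μ equals the corresponding matrix applied to μ. -/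
/-- The generator `R_i` (for the parameter `μ`) acting on `ℝ³`. -/
noncomputable def R (μ : Fin 3 → ℝ) (i : Fin 3) (σ : Fin 3 → ℝ) : Fin 3 → ℝ :=
  Function.update σ i (σ i + 4 * μ i - 2 * ∑ j, cartanB2 i j * σ j)

/-- The matrix `F⁽¹⁾(m₁, m₂)` (type `(0,0)`). -/
noncomputable def Fmat1 (m1 m2 : ℝ) : Matrix (Fin 3) (Fin 3) ℝ :=
  let q := (m1 ^ 2 + m2 ^ 2) / 4
  let s := (m1 ^ 2 + m2 ^ 2) / 2
  !![q, q + m1 - m2, s + 2 * m1;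
     q - m1 + m2, q, s + 2 * m2;
     q - m1, q - m2, s]

/-- The matrix `F⁽²⁾(m₁, m₂)` (type `(0,1)`). -/
noncomputable def Fmat2 (m1 m2 : ℝ) : Matrix (Fin 3) (Fin 3) ℝ :=
  let q := (m1 ^ 2 + m2 ^ 2) / 4
  let s := (m1 ^ 2 + m2 ^ 2) / 2
  !![q - m2 / 2 + 1 / 4, q + m1 + m2 / 2 - 3 / 4, s + 2 * m1 - m2 + 1 / 2;
     q - m1 + m2 / 2 - 3 / 4, q + 3 * m2 / 2 + 9 / 4, s + m2 - 3 / 2;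
     q - m1 - m2 / 2 + 1 / 4, q + m2 / 2 - 3 / 4, s - m2 + 1 / 2]

/-- The matrix `F⁽³⁾(m₁, m₂)` (type `(1,0)`). -/
noncomputable def Fmat3 (m1 m2 : ℝ) : Matrix (Fin 3) (Fin 3) ℝ :=
  let q := (m1 ^ 2 + m2 ^ 2) / 4
  let s := (m1 ^ 2 + m2 ^ 2) / 2
  !![q + 3 * m1 / 2 + 9 / 4, q + m1 / 2 - m2 - 3 / 4, s + m1 - 3 / 2;
     q + m1 / 2 + m2 - 3 / 4, q - m1 / 2 + 1 / 4, s - m1 + 2 * m2 + 1 / 2;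
     q + m1 / 2 - 3 / 4, q - m1 / 2 - m2 + 1 / 4, s - m1 + 1 / 2]

/-- The matrix `F⁽⁴⁾(m₁, m₂)` (type `(1,1)`). -/
noncomputable def Fmat4 (m1 m2 : ℝ) : Matrix (Fin 3) (Fin 3) ℝ :=
  let q := (m1 ^ 2 + m2 ^ 2) / 4
  let s := (m1 ^ 2 + m2 ^ 2) / 2
  !![q + 3 * m1 / 2 - m2 / 2 + 5 / 2, q + m1 / 2 + m2 / 2 - 3 / 2, s + m1 - m2 - 1;
     q + m1 / 2 + m2 / 2 - 3 / 2, q - m1 / 2 + 3 * m2 / 2 + 5 / 2, s - m1 + m2 - 1;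
     q + m1 / 2 - m2 / 2 - 1 / 2, q - m1 / 2 + m2 / 2 - 1 / 2, s - m1 - m2 + 1]

/-- The matrix `F⁽⁵⁾(m₁, m₂)` (type `(2,2)`). -/
noncomputable def Fmat5 (m1 m2 : ℝ) : Matrix (Fin 3) (Fin 3) ℝ :=
  let q := (m1 ^ 2 + m2 ^ 2) / 4
  let s := (m1 ^ 2 + m2 ^ 2) / 2
  !![q + m1 - m2 + 2, q - 2, s + 2 * m1;
     q - 2, q - m1 + m2 + 2, s + 2 * m2;
     q - m2, q - m1, s]

/-- The matrix `F⁽⁶⁾(m₁, m₂)` (type `(2,3)`). -/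
noncomputable def Fmat6 (m1 m2 : ℝ) : Matrix (Fin 3) (Fin 3) ℝ :=
  let q := (m1 ^ 2 + m2 ^ 2) / 4
  let s := (m1 ^ 2 + m2 ^ 2) / 2
  !![q + m1 + m2 / 2 + 5 / 4, q - m2 / 2 - 7 / 4, s + 2 * m1 - m2 + 1 / 2;
     q + 3 * m2 / 2 + 1 / 4, q - m1 + m2 / 2 + 5 / 4, s + m2 - 3 / 2;
     q + m2 / 2 - 3 / 4, q - m1 - m2 / 2 + 1 / 4, s - m2 + 1 / 2]

/-- The matrix `F⁽⁷⁾(m₁, m₂)` (type `(3,2)`). -/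
noncomputable def Fmat7 (m1 m2 : ℝ) : Matrix (Fin 3) (Fin 3) ℝ :=
  let q := (m1 ^ 2 + m2 ^ 2) / 4
  let s := (m1 ^ 2 + m2 ^ 2) / 2
  !![q + m1 / 2 - m2 + 5 / 4, q + 3 * m1 / 2 + 1 / 4, s + m1 - 3 / 2;
     q - m1 / 2 - 7 / 4, q + m1 / 2 + m2 + 5 / 4, s - m1 + 2 * m2 + 1 / 2;
     q - m1 / 2 - m2 + 1 / 4, q + m1 / 2 - 3 / 4, s - m1 + 1 / 2]

/-- The matrix `F⁽⁸⁾(m₁, m₂)` (type `(3,3)`). -/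
noncomputable def Fmat8 (m1 m2 : ℝ) : Matrix (Fin 3) (Fin 3) ℝ :=
  let q := (m1 ^ 2 + m2 ^ 2) / 4
  let s := (m1 ^ 2 + m2 ^ 2) / 2
  !![q + m1 / 2 + m2 / 2 + 1 / 2, q + 3 * m1 / 2 - m2 / 2 + 1 / 2, s + m1 - m2 - 1;
     q - m1 / 2 + 3 * m2 / 2 + 1 / 2, q + m1 / 2 + m2 / 2 + 1 / 2, s - m1 + m2 - 1;
     q - m1 / 2 + m2 / 2 - 1 / 2, q + m1 / 2 - m2 / 2 - 1 / 2, s - m1 - m2 + 1]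

/-- The family `ℓ ↦ F⁽ℓ⁾(m₁, m₂)`, `ℓ = 1, …, 8` (indexed by `Fin 8`). -/
noncomputable def Fmat : Fin 8 → ℝ → ℝ → Matrix (Fin 3) (Fin 3) ℝ :=
  ![Fmat1, Fmat2, Fmat3, Fmat4, Fmat5, Fmat6, Fmat7, Fmat8]

/-- The index table `ℓ ↦ ℓ₁` (0-indexed): `(3,4,1,2,7,8,5,6)` in 1-indexed notation. -/
def perm1 : Fin 8 → Fin 8 := ![2, 3, 0, 1, 6, 7, 4, 5]

/-- The index table `ℓ ↦ ℓ₂` (0-indexed): `(2,1,4,3,6,5,8,7)` in 1-indexed notation. -/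
def perm2 : Fin 8 → Fin 8 := ![1, 0, 3, 2, 5, 4, 7, 6]

/-- The index table `ℓ ↦ ℓ₃` (0-indexed): `(8,6,7,5,4,2,3,1)` in 1-indexed notation. -/
def perm3 : Fin 8 → Fin 8 := ![7, 5, 6, 4, 3, 1, 2, 0]

/-- The lift `RM` is compatible with the action `R` on vectors. -/
theorem R_mulVec (μ : Fin 3 → ℝ) (i : Fin 3) (F : Matrix (Fin 3) (Fin 3) ℝ) :
    R μ i (F.mulVec μ) = (RM i F).mulVec μ := by
  ext j
  by_cases h : j = i
  · subst h
    simp only [R, RM, Function.update_self, Matrix.mulVec, dotProduct, Matrix.updateRow_self,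
      Fin.sum_univ_three]
    fin_cases j <;> simp <;> ring
  · simp [R, RM, Matrix.mulVec, Function.update_of_ne h, Matrix.updateRow_ne h]

theorem RM_zero_eq (F : Matrix (Fin 3) (Fin 3) ℝ) :
    RM 0 F = !![4 - F 0 0 + 2 * F 2 0, -F 0 1 + 2 * F 2 1, -F 0 2 + 2 * F 2 2;
      F 1 0, F 1 1, F 1 2; F 2 0, F 2 1, F 2 2] := by
  ext j k
  fin_cases j <;> fin_cases k <;>
    simp [RM, cartanB2, Fin.sum_univ_three, Matrix.updateRow_apply] <;> ring

theorem RM_one_eq (F : Matrix (Fin 3) (Fin 3) ℝ) :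
    RM 1 F = !![F 0 0, F 0 1, F 0 2;
      -F 1 0 + 2 * F 2 0, 4 - F 1 1 + 2 * F 2 1, -F 1 2 + 2 * F 2 2;
      F 2 0, F 2 1, F 2 2] := by
  ext j k
  fin_cases j <;> fin_cases k <;>
    simp [RM, cartanB2, Fin.sum_univ_three, Matrix.updateRow_apply] <;> ring

theorem RM_two_eq (F : Matrix (Fin 3) (Fin 3) ℝ) :
    RM 2 F = !![F 0 0, F 0 1, F 0 2; F 1 0, F 1 1, F 1 2;
      F 0 0 + F 1 0 - F 2 0, F 0 1 + F 1 1 - F 2 1, 4 + F 0 2 + F 1 2 - F 2 2] := by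
  ext j k
  fin_cases j <;> fin_cases k <;>
    simp [RM, cartanB2, Fin.sum_univ_three, Matrix.updateRow_apply] <;> ring

/-- Two `3 × 3` matrices given by their entries agree if the entries do. -/
theorem matrix_three_congr {a b c d e f g h i a' b' c' d' e' f' g' h' i' : ℝ}
    (ha : a = a') (hb : b = b') (hc : c = c') (hd : d = d') (he : e = e') (hf : f = f')
    (hg : g = g') (hh : h = h') (hi : i = i') :
    !![a, b, c; d, e, f; g, h, i] = !![a', b', c'; d', e', f'; g', h', i'] := by
  subst_vars
  rfl

theorem RM_zero_Fmat (m1 m2 : ℝ) (ℓ : Fin 8) :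
    RM 0 (Fmat ℓ m1 m2) = Fmat (perm1 ℓ) (1 - m1) m2 := by
  rw [RM_zero_eq]
  fin_cases ℓ <;> refine matrix_three_congr ?_ ?_ ?_ ?_ ?_ ?_ ?_ ?_ ?_ <;>
    simp only [Fmat, Fin.reduceFinMk, Fin.zero_eta, Fin.mk_one, Fin.isValue, Matrix.cons_val,
      Fmat1, Fmat2, Fmat3, Fmat4, Fmat5, Fmat6, Fmat7, Fmat8, Matrix.of_apply] <;> ring

theorem RM_one_Fmat (m1 m2 : ℝ) (ℓ : Fin 8) :
    RM 1 (Fmat ℓ m1 m2) = Fmat (perm2 ℓ) m1 (1 - m2) := by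
  rw [RM_one_eq]
  fin_cases ℓ <;> refine matrix_three_congr ?_ ?_ ?_ ?_ ?_ ?_ ?_ ?_ ?_ <;>
    simp only [Fmat, Fin.reduceFinMk, Fin.zero_eta, Fin.mk_one, Fin.isValue, Matrix.cons_val,
      Fmat1, Fmat2, Fmat3, Fmat4, Fmat5, Fmat6, Fmat7, Fmat8, Matrix.of_apply] <;> ring

theorem RM_two_Fmat (m1 m2 : ℝ) (ℓ : Fin 8) :
    RM 2 (Fmat ℓ m1 m2) = Fmat (perm3 ℓ) (-m2 - 1) (-m1 - 1) := by
  rw [RM_two_eq]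
  fin_cases ℓ <;> refine matrix_three_congr ?_ ?_ ?_ ?_ ?_ ?_ ?_ ?_ ?_ <;>
    simp only [Fmat, Fin.reduceFinMk, Fin.zero_eta, Fin.mk_one, Fin.isValue, Matrix.cons_val,
      Fmat1, Fmat2, Fmat3, Fmat4, Fmat5, Fmat6, Fmat7, Fmat8, Matrix.of_apply] <;> ring

/-- The matrix identities `R₁ F⁽ℓ⁾(m₁,m₂) = F⁽ℓ¹⁾(1-m₁,m₂)`,
`R₂ F⁽ℓ⁾(m₁,m₂) = F⁽ℓ²⁾(m₁,1-m₂)`, `R₃ F⁽ℓ⁾(m₁,m₂) = F⁽ℓ³⁾(-m₂-1,-m₁-1)`, with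
`(ℓ₁,ℓ₂,ℓ₃)` as in the table; equivalently, the corresponding identities for the
vectors `F⁽ℓ⁾(m₁,m₂) μ`, for every `μ ∈ ℝ³`. -/
theorem generators_act_on_Fmat (m1 m2 : ℝ) (ℓ : Fin 8) :
    RM 0 (Fmat ℓ m1 m2) = Fmat (perm1 ℓ) (1 - m1) m2 ∧
    RM 1 (Fmat ℓ m1 m2) = Fmat (perm2 ℓ) m1 (1 - m2) ∧
    RM 2 (Fmat ℓ m1 m2) = Fmat (perm3 ℓ) (-m2 - 1) (-m1 - 1) ∧
    (∀ μ : Fin 3 → ℝ,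
      R μ 0 ((Fmat ℓ m1 m2).mulVec μ) = (Fmat (perm1 ℓ) (1 - m1) m2).mulVec μ ∧
      R μ 1 ((Fmat ℓ m1 m2).mulVec μ) = (Fmat (perm2 ℓ) m1 (1 - m2)).mulVec μ ∧
      R μ 2 ((Fmat ℓ m1 m2).mulVec μ) = (Fmat (perm3 ℓ) (-m2 - 1) (-m1 - 1)).mulVec μ) := by
  refine ⟨RM_zero_Fmat m1 m2 ℓ, RM_one_Fmat m1 m2 ℓ, RM_two_Fmat m1 m2 ℓ, fun μ => ?_⟩
  simp only [R_mulVec, RM_zero_Fmat, RM_one_Fmat, RM_two_Fmat, and_self]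
end
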